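/- A finite group G satisfies the intersection condition if and only if G is cyclic of prime power order, or an elementary abelian 2-group, or a dihedral 2-group, or cyclic of order 2p, or dihedral of order 2p^n or of order 4p, where p is an odd prime. -/

import Mathlib

/-!
The intersection condition can be tested on cyclic subgroups: it says that the subgroups `⟨x⟩`, for
`x` of order greater than `2`, form a chain (`satisfiesIC_iff_forall_mem_zpowers`). Unless `G` has
exponent dividing `2`, an element `c` of maximal order therefore generates a subgroup containing
every element of order greater than `2` (`exists_cyclic_of_satisfiesIC`). Every element `b` outside
`⟨c⟩`, as well as `b * c`, is then an involution, so `b` inverts `c`; since a product of two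
inverting elements centralises `c`, the index of `⟨c⟩` is at most `2`, and `G` is either `⟨c⟩` or
dihedral with rotation subgroup `⟨c⟩` (`cyclic_or_dihedral`).

Inside `⟨c⟩` containment of cyclic subgroups is divisibility of orders, so the condition becomes: any
two divisors of `orderOf c` larger than `2` are comparable under divisibility. This holds exactly
when `orderOf c` is a prime power or twice an odd prime (`arith_of_dvd_chain`). Conversely, in each
listed group that is not of exponent dividing `2` all elements of order greater than `2` lie in such
a cyclic subgroup, because reflections have order `2`.
-/

/-- A finite group `G` satisfies the intersection condition if it has no subgroups
`H` and `K` such that both `H \ K` and `K \ H` contain an element of order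
greater than 2. -/
def satisfiesIC (G : Type*) [Group G] : Prop :=
  ¬ ∃ H K : Subgroup G,
      (∃ x ∈ H, x ∉ K ∧ 2 < orderOf x) ∧ (∃ y ∈ K, y ∉ H ∧ 2 < orderOf y)

/-- Let `p` be an odd prime divisor of `n`. If `n` is neither a power of `p` nor `2 * p`, it has two
incomparable divisors larger than `2`: either `p` and the cofactor of the full power of `p`, or
`p ^ 2` and `2 * p`. -/
lemma arith_of_dvd_chain {n : ℕ} (hn : n ≠ 0)
    (h : ∀ a b, a ∣ n → b ∣ n → 2 < a → 2 < b → a ∣ b ∨ b ∣ a) :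
    (∃ k, n = 2 ^ k) ∨ ∃ p, p.Prime ∧ Odd p ∧ ((∃ k, 1 ≤ k ∧ n = p ^ k) ∨ n = 2 * p) := by
  obtain ⟨k, hk⟩ | ⟨p, hp, hpn, hodd⟩ := n.eq_two_pow_or_exists_odd_prime_and_dvd
  · exact .inl ⟨k, hk⟩
  refine .inr ⟨p, hp, hodd, ?_⟩
  have hp2 : 2 < p := by
    have := hp.two_le
    obtain ⟨t, rfl⟩ := hodd
    omega
  obtain ⟨k, m, hpm, rfl⟩ := Nat.exists_eq_pow_mul_and_not_dvd hn p hp.ne_one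
  have hk : k ≠ 0 := by
    rintro rfl
    simp_all
  have hm0 : m ≠ 0 := by
    rintro rfl
    simp at hpm
  rcases lt_or_ge 2 m with hm | hm
  · -- `p` and `m` are coprime divisors, both larger than `2`
    exfalso
    rcases h p m hpn (Dvd.intro_left _ rfl) hp2 hm with h1 | h1
    · exact hpm h1
    · rcases (Nat.dvd_prime hp).1 h1 with rfl | rfl
      · omega
      · exact hpm dvd_rfl
  obtain rfl | rfl : m = 1 ∨ m = 2 := by omega
  · exact .inl ⟨k, by omega, by simp⟩
  · right
    obtain rfl | hk2 : k = 1 ∨ 2 ≤ k := by omega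
    · ring
    -- `p ^ 2` and `2 * p` are incomparable divisors
    exfalso
    have h1 : p ^ 2 ∣ p ^ k * 2 := (pow_dvd_pow p hk2).mul_right 2
    have h2 : 2 * p ∣ p ^ k * 2 := by
      rw [mul_comm]
      exact mul_dvd_mul_right (dvd_pow_self p hk) 2
    rcases h _ _ h1 h2 (by nlinarith) (by omega) with h3 | h3
    · rw [sq] at h3
      exact hpm (Nat.dvd_of_mul_dvd_mul_right hp.pos h3)
    · have : 2 ∣ p := Nat.prime_two.dvd_of_dvd_pow ((Dvd.intro _ rfl).trans h3)
      obtain ⟨t, rfl⟩ := hodd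
      omega

lemma dvd_chain_of_prime_pow {p k : ℕ} (hp : p.Prime) (a b : ℕ) (ha : a ∣ p ^ k)
    (hb : b ∣ p ^ k) : a ∣ b ∨ b ∣ a := by
  obtain ⟨i, -, rfl⟩ := (Nat.dvd_prime_pow hp).1 ha
  obtain ⟨j, -, rfl⟩ := (Nat.dvd_prime_pow hp).1 hb
  exact (le_total i j).imp (pow_dvd_pow p) (pow_dvd_pow p)

lemma dvd_chain_of_two_mul_prime {p : ℕ} (hp : p.Prime) (a b : ℕ) (ha : a ∣ 2 * p)
    (hb : b ∣ 2 * p) (ha2 : 2 < a) (hb2 : 2 < b) : a ∣ b ∨ b ∣ a := by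
  have key : ∀ d, d ∣ 2 * p → 2 < d → d = p ∨ d = 2 * p := by
    intro d hd hd2
    obtain ⟨x, y, hx, hy, rfl⟩ := (Nat.dvd_mul).1 hd
    rcases (Nat.dvd_prime Nat.prime_two).1 hx with rfl | rfl <;>
      rcases (Nat.dvd_prime hp).1 hy with rfl | rfl <;> simp_all
  rcases key a ha ha2 with rfl | rfl <;> rcases key b hb hb2 with rfl | rfl <;> simp

section Group

variable {G : Type*} [Group G]

/-- It suffices to test the intersection condition on cyclic subgroups: those generated by elements
of order greater than `2` form a chain. -/
lemma satisfiesIC_iff_forall_mem_zpowers :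
    satisfiesIC G ↔ ∀ x y : G, 2 < orderOf x → 2 < orderOf y →
      x ∈ Subgroup.zpowers y ∨ y ∈ Subgroup.zpowers x := by
  constructor
  · intro h x y hx hy
    by_contra! hxy
    exact h ⟨.zpowers x, .zpowers y, ⟨x, Subgroup.mem_zpowers x, hxy.1, hx⟩,
      ⟨y, Subgroup.mem_zpowers y, hxy.2, hy⟩⟩
  · rintro h ⟨H, K, ⟨x, hxH, hxK, hx⟩, ⟨y, hyK, hyH, hy⟩⟩
    rcases h x y hx hy with h1 | h1
    · exact hxK ((Subgroup.zpowers_le.2 hyK) h1)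
    · exact hyH ((Subgroup.zpowers_le.2 hxH) h1)

/-- Inside a finite cyclic group, divisibility of orders is containment of generated subgroups. -/
lemma mem_zpowers_of_orderOf_dvd [Finite G] {c x y : G} (hx : x ∈ Subgroup.zpowers c)
    (hy : y ∈ Subgroup.zpowers c) (h : orderOf x ∣ orderOf y) : x ∈ Subgroup.zpowers y := by
  obtain ⟨i, rfl⟩ := (mem_powers_iff_mem_zpowers.2 hx)
  obtain ⟨j, rfl⟩ := (mem_powers_iff_mem_zpowers.2 hy)
  have hc := orderOf_pos c
  simp only [orderOf_pow] at h
  obtain ⟨u, hu⟩ := Nat.gcd_dvd_left (orderOf c) i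
  obtain ⟨v, hv⟩ := Nat.gcd_dvd_left (orderOf c) j
  have hgi : 0 < (orderOf c).gcd i := Nat.gcd_pos_of_pos_left _ hc
  have hgj : 0 < (orderOf c).gcd j := Nat.gcd_pos_of_pos_left _ hc
  rw [Nat.div_eq_of_eq_mul_right hgi hu, Nat.div_eq_of_eq_mul_right hgj hv] at h
  obtain ⟨w, rfl⟩ := h
  have hu0 : 0 < u := Nat.pos_of_ne_zero fun h0 => by rw [h0, mul_zero] at hu; omega
  have hg : (orderOf c).gcd i = (orderOf c).gcd j * w :=
    Nat.eq_of_mul_eq_mul_right hu0 (by rw [← hu, mul_assoc, mul_comm w u]; exact hv)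
  -- Bézout: `c ^ gcd (orderOf c, j)` is a power of `c ^ j`
  have hbez : c ^ (orderOf c).gcd j ∈ Subgroup.zpowers (c ^ j) := by
    refine ⟨(orderOf c).gcdB j, ?_⟩
    simp only
    rw [← zpow_natCast c ((orderOf c).gcd j), Nat.gcd_eq_gcd_ab, zpow_add, zpow_mul, zpow_mul]
    simp
  obtain ⟨t, ht⟩ : (orderOf c).gcd j ∣ i := (Dvd.intro _ hg.symm).trans (Nat.gcd_dvd_right _ _)
  simp only
  rw [ht, pow_mul]
  exact Subgroup.pow_mem _ hbez t

lemma satisfiesIC_of_cyclic [Finite G] (c : G)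
    (hc : ∀ x : G, 2 < orderOf x → x ∈ Subgroup.zpowers c)
    (h : ∀ a b, a ∣ orderOf c → b ∣ orderOf c → 2 < a → 2 < b → a ∣ b ∨ b ∣ a) :
    satisfiesIC G := by
  rw [satisfiesIC_iff_forall_mem_zpowers]
  intro x y hx hy
  exact (h _ _ (orderOf_dvd_of_mem_zpowers (hc x hx)) (orderOf_dvd_of_mem_zpowers (hc y hy))
    hx hy).imp (mem_zpowers_of_orderOf_dvd (hc x hx) (hc y hy))
      (mem_zpowers_of_orderOf_dvd (hc y hy) (hc x hx))

lemma satisfiesIC_of_dihedral [Finite G] {n : ℕ} (e : G ≃* DihedralGroup n)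
    (h : ∀ a b, a ∣ n → b ∣ n → 2 < a → 2 < b → a ∣ b ∨ b ∣ a) : satisfiesIC G := by
  refine satisfiesIC_of_cyclic (e.symm (.r 1)) (fun x hx => ?_) ?_
  · rw [← e.orderOf_eq] at hx
    cases hex : e x with
    | r i =>
      obtain ⟨k, rfl⟩ := ZMod.intCast_surjective i
      exact ⟨k, by simp [← map_zpow, ← hex]⟩
    | sr i => simp [hex] at hx
  · rwa [e.symm.orderOf_eq, DihedralGroup.orderOf_r_one]

/-- An element `c` of maximal order generates the largest member of the chain of cyclic subgroups. -/
lemma exists_cyclic_of_satisfiesIC [Finite G] (h : satisfiesIC G) (h2 : ¬ ∀ g : G, g ^ 2 = 1) :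
    ∃ c : G, 2 < orderOf c ∧ ∀ x : G, 2 < orderOf x → x ∈ Subgroup.zpowers c := by
  rw [satisfiesIC_iff_forall_mem_zpowers] at h
  obtain ⟨c, hmax⟩ := Finite.exists_max (fun g : G => orderOf g)
  have hc : 2 < orderOf c := by
    by_contra! hle
    refine h2 fun g => orderOf_dvd_iff_pow_eq_one.1 ?_
    have h1 := orderOf_pos g
    have h3 := (hmax g).trans hle
    interval_cases orderOf g <;> simp
  refine ⟨c, hc, fun x hx => (h x c hx hc).elim id fun hcx => ?_⟩
  have hle : Subgroup.zpowers c ≤ Subgroup.zpowers x := Subgroup.zpowers_le.2 hcx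
  have : Subgroup.zpowers c = Subgroup.zpowers x :=
    Subgroup.eq_of_le_of_card_ge hle (by simpa [Nat.card_zpowers] using hmax x)
  exact this ▸ Subgroup.mem_zpowers x

/-- Recognition of a dihedral group from an involution `b` outside `⟨c⟩` that inverts `c`, when the
cosets `⟨c⟩` and `b⟨c⟩` cover `G`. -/
lemma exists_mulEquiv_dihedral {c b : G} (hb : b ∉ Subgroup.zpowers c) (hb2 : b * b = 1)
    (hbc : b * c * b = c⁻¹)
    (hcover : ∀ g : G, g ∈ Subgroup.zpowers c ∨ b * g ∈ Subgroup.zpowers c) :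
    Nonempty (G ≃* DihedralGroup (orderOf c)) := by
  set n := orderOf c
  have hbi : b⁻¹ = b := inv_eq_of_mul_eq_one_left hb2
  have hconj (k : ℤ) : b * c ^ k * b = c ^ (-k) := by
    have := conj_zpow (i := k) (a := b) (b := c)
    rw [hbi, hbc] at this
    rw [← this, inv_zpow']
  have hmove (k : ℤ) : c ^ k * b = b * c ^ (-k) := by
    rw [← hconj, ← mul_assoc, ← mul_assoc, hb2, one_mul]
  let φ : ZMod n → G := fun i => c ^ (i.cast : ℤ)
  have hφ (k : ℤ) : φ (k : ZMod n) = c ^ k := by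
    refine zpow_eq_zpow_iff_modEq.2 ((ZMod.intCast_eq_intCast_iff _ _ _).1 ?_)
    simp
  let f : DihedralGroup n →* G := MonoidHom.mk' (fun
    | .r i => φ i
    | .sr i => b * φ i) (by
      rintro (i | i) (j | j) <;> obtain ⟨k, rfl⟩ := ZMod.intCast_surjective i <;>
        obtain ⟨l, rfl⟩ := ZMod.intCast_surjective j
      · simp only [DihedralGroup.r_mul_r, ← Int.cast_add, hφ, zpow_add]
      · simp only [DihedralGroup.r_mul_sr, ← Int.cast_sub, hφ]
        rw [← mul_assoc, hmove, mul_assoc, ← zpow_add, neg_add_eq_sub]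
      · simp only [DihedralGroup.sr_mul_r, ← Int.cast_add, hφ, zpow_add, mul_assoc]
      · simp only [DihedralGroup.sr_mul_sr, ← Int.cast_sub, hφ]
        rw [← mul_assoc, hconj, ← zpow_add, neg_add_eq_sub])
  have hfr (k : ℤ) : f (.r k) = c ^ k := hφ k
  have hfs (k : ℤ) : f (.sr k) = b * c ^ k := congrArg (b * ·) (hφ k)
  refine ⟨(MulEquiv.ofBijective f ⟨(injective_iff_map_eq_one f).2 ?_, fun g => ?_⟩).symm⟩
  · rintro (i | i) hi <;> obtain ⟨k, rfl⟩ := ZMod.intCast_surjective i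
    · rw [hfr, ← orderOf_dvd_iff_zpow_eq_one] at hi
      rw [(ZMod.intCast_zmod_eq_zero_iff_dvd k n).2 hi, DihedralGroup.r_zero]
    · rw [hfs] at hi
      exact absurd ⟨-k, by simpa [eq_comm, zpow_neg] using eq_inv_of_mul_eq_one_left hi⟩ hb
  · rcases hcover g with ⟨k, hk⟩ | ⟨k, hk⟩
    · exact ⟨.r k, (hfr k).trans hk⟩
    · refine ⟨.sr k, (hfs k).trans ?_⟩
      simp only at hk
      rw [hk, ← mul_assoc, hb2, one_mul]

/-- Elements outside `⟨c⟩` are involutions, so each of them inverts `c`. If two of them lay in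
different cosets of `⟨c⟩`, their product would both invert and centralise `c`, forcing `c ^ 2 = 1`;
hence `⟨c⟩` has index at most `2`. -/
lemma cyclic_or_dihedral [Finite G] {c : G} (hc : 2 < orderOf c)
    (hmem : ∀ x : G, 2 < orderOf x → x ∈ Subgroup.zpowers c) :
    (∀ g, g ∈ Subgroup.zpowers c) ∨ Nonempty (G ≃* DihedralGroup (orderOf c)) := by
  by_cases htop : ∀ g, g ∈ Subgroup.zpowers c
  · exact .inl htop
  right
  push Not at htop
  obtain ⟨b, hb⟩ := htop
  have hinvol (g : G) (hg : g ∉ Subgroup.zpowers c) : g * g = 1 := by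
    have h3 : orderOf g ≤ 2 := by
      by_contra! h
      exact hg (hmem g h)
    have h1 := orderOf_pos g
    rw [← sq]
    refine orderOf_dvd_iff_pow_eq_one.1 ?_
    interval_cases orderOf g <;> simp
  have hcc := Subgroup.mem_zpowers c
  have hinv (g : G) (hg : g ∉ Subgroup.zpowers c) : g * c * g = c⁻¹ := by
    have := hinvol (g * c) fun h => hg ((Subgroup.mul_mem_cancel_right _ hcc).1 h)
    exact eq_inv_of_mul_eq_one_left (by simpa [mul_assoc] using this)
  refine exists_mulEquiv_dihedral hb (hinvol b hb) (hinv b hb) fun g => ?_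
  by_contra! hg
  have h1 := hinv _ hg.2
  have hcomm : b * g = g * b := by
    have := hinvol _ hg.2
    rw [← inv_eq_of_mul_eq_one_left this, mul_inv_rev,
      inv_eq_of_mul_eq_one_left (hinvol _ hb), inv_eq_of_mul_eq_one_left (hinvol _ hg.1)]
  have h2 : b * g * c * (b * g) = c := by
    nth_rw 2 [hcomm]
    calc b * g * c * (g * b) = b * (g * c * g) * b := by simp only [mul_assoc]
      _ = (b⁻¹ * c * b⁻¹)⁻¹ := by rw [hinv g hg.1]; simp [mul_assoc]
      _ = c := by rw [inv_eq_of_mul_eq_one_left (hinvol _ hb), hinv b hb, inv_inv]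
  have : c ^ 2 = 1 := by
    rw [sq, ← eq_inv_iff_mul_eq_one, ← h1, h2]
  have := Nat.le_of_dvd two_pos (orderOf_dvd_of_pow_eq_one this)
  omega

end Group

/-- A finite group satisfies the intersection condition iff it is cyclic of prime
power order, an elementary abelian 2-group, a dihedral 2-group, cyclic of order
`2p`, or dihedral of order `2pⁿ` or `4p`, where `p` is an odd prime. -/
theorem satisfiesIC_iff (G : Type*) [Group G] [Finite G] :
    satisfiesIC G ↔
      ((IsCyclic G ∧ ∃ p n : ℕ, p.Prime ∧ Nat.card G = p ^ n) ∨
        (∀ g : G, g ^ 2 = 1) ∨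
        (∃ n : ℕ, Nonempty (G ≃* DihedralGroup (2 ^ n))) ∨
        (IsCyclic G ∧ ∃ p : ℕ, p.Prime ∧ Odd p ∧ Nat.card G = 2 * p) ∨
        (∃ p n : ℕ, p.Prime ∧ Odd p ∧ 1 ≤ n ∧
          Nonempty (G ≃* DihedralGroup (p ^ n))) ∨
        (∃ p : ℕ, p.Prime ∧ Odd p ∧ Nonempty (G ≃* DihedralGroup (2 * p)))) := by
  have hcyc (hG : IsCyclic G) (h : ∀ a b, a ∣ Nat.card G → b ∣ Nat.card G → 2 < a → 2 < b →
      a ∣ b ∨ b ∣ a) : satisfiesIC G := by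
    obtain ⟨c, hc⟩ := hG.exists_generator
    refine satisfiesIC_of_cyclic c (fun x _ => hc x) ?_
    rwa [orderOf_eq_card_of_forall_mem_zpowers hc]
  constructor
  · intro h
    by_cases h2 : ∀ g : G, g ^ 2 = 1
    · exact .inr (.inl h2)
    obtain ⟨c, hc, hmem⟩ := exists_cyclic_of_satisfiesIC h h2
    have hchain : ∀ a b, a ∣ orderOf c → b ∣ orderOf c → 2 < a → 2 < b → a ∣ b ∨ b ∣ a := by
      intro a b ha hb ha2 hb2
      have key (d : ℕ) (hd : d ∣ orderOf c) : orderOf (c ^ (orderOf c / d)) = d := by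
        rw [orderOf_pow, Nat.gcd_eq_right (Nat.div_dvd_of_dvd hd),
          Nat.div_div_self hd (orderOf_pos c).ne']
      have := satisfiesIC_iff_forall_mem_zpowers.1 h (c ^ (orderOf c / a)) (c ^ (orderOf c / b))
        (by rwa [key a ha]) (by rwa [key b hb])
      rw [← key a ha, ← key b hb]
      exact this.imp orderOf_dvd_of_mem_zpowers orderOf_dvd_of_mem_zpowers
    have harith := arith_of_dvd_chain (orderOf_pos c).ne' hchain
    rcases cyclic_or_dihedral hc hmem with hgen | hdih
    · have hG : IsCyclic G := ⟨c, hgen⟩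
      rw [orderOf_eq_card_of_forall_mem_zpowers hgen] at harith
      obtain ⟨k, hk⟩ | ⟨p, hp, hodd, ⟨k, hk1, hk⟩ | hk⟩ := harith
      · exact .inl ⟨hG, 2, k, Nat.prime_two, hk⟩
      · exact .inl ⟨hG, p, k, hp, hk⟩
      · exact .inr (.inr (.inr (.inl ⟨hG, p, hp, hodd, hk⟩)))
    · obtain ⟨k, hk⟩ | ⟨p, hp, hodd, ⟨k, hk1, hk⟩ | hk⟩ := harith
      · exact .inr (.inr (.inl ⟨k, hk ▸ hdih⟩))
      · exact .inr (.inr (.inr (.inr (.inl ⟨p, k, hp, hodd, hk1, hk ▸ hdih⟩))))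
      · exact .inr (.inr (.inr (.inr (.inr ⟨p, hp, hodd, hk ▸ hdih⟩))))
  · rintro (⟨hG, p, n, hp, hn⟩ | h2 | ⟨n, ⟨e⟩⟩ | ⟨hG, p, hp, -, hn⟩ | ⟨p, n, hp, -, -, ⟨e⟩⟩ |
      ⟨p, hp, -, ⟨e⟩⟩)
    · exact hcyc hG fun a b ha hb _ _ => dvd_chain_of_prime_pow hp a b (hn ▸ ha) (hn ▸ hb)
    · rintro ⟨H, K, ⟨x, -, -, hx⟩, -⟩
      exact absurd (Nat.le_of_dvd two_pos (orderOf_dvd_of_pow_eq_one (h2 x))) (not_le.2 hx)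
    · exact satisfiesIC_of_dihedral e fun a b ha hb _ _ =>
        dvd_chain_of_prime_pow Nat.prime_two a b ha hb
    · exact hcyc hG fun a b ha hb => dvd_chain_of_two_mul_prime hp a b (hn ▸ ha) (hn ▸ hb)
    · exact satisfiesIC_of_dihedral e fun a b ha hb _ _ => dvd_chain_of_prime_pow hp a b ha hb
    · exact satisfiesIC_of_dihedral e (dvd_chain_of_two_mul_prime hp)
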